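/- For every g ∈ O₇(𝔽₅), the conjugate g⁻¹·A₅·g does NOT vanish at all positions of P; that is, there exists a position (i,j) ∈ P with (g⁻¹·A₅·g)ᵢⱼ ≠ 0. -/

import Mathlib

open Matrix

/-- The 7×7 anti-diagonal identity matrix over `𝔽₅` (0-indexed: entry 1 iff `i + j = 6`). -/
def Jmat : Matrix (Fin 7) (Fin 7) (ZMod 5) :=
  fun i j => if (i : ℕ) + (j : ℕ) = 6 then 1 else 0

/-- The matrix `A₅ ∈ M₇(𝔽₅)` from Appendix A of the paper. -/
def A5 : Matrix (Fin 7) (Fin 7) (ZMod 5) :=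
  !![0,0,1,1,1,0,0;
     1,0,0,0,0,0,0;
     0,1,0,0,0,0,1;
     0,0,0,0,0,0,1;
     0,1,0,0,0,0,1;
     0,0,1,0,1,0,0;
     0,0,0,0,0,1,0]

/-- The set of matrix positions of Lemma 2.2 (0-indexed; in the paper's 1-indexed
convention these are (3,1),(4,1),(5,1),(5,2),(6,1),(6,2),(6,3),(7,1),(7,2),(7,3),(7,4),(7,5)). -/
def P : Set (Fin 7 × Fin 7) :=
  {(2,0),(3,0),(4,0),(4,1),(5,0),(5,1),(5,2),(6,0),(6,1),(6,2),(6,3),(6,4)}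

namespace S11

def all5 (f : ℕ → Bool) : Bool := f 0 && (f 1 && (f 2 && (f 3 && f 4)))

theorem all5_spec {f : ℕ → Bool} (h : all5 f = true) {n : ℕ} (hn : n < 5) : f n = true := by
  simp only [all5, Bool.and_eq_true] at h
  obtain ⟨h0, h1, h2, h3, h4⟩ := h
  interval_cases n <;> assumption

def imp (a b : Bool) : Bool := match a with
  | true => b
  | false => true

theorem imp_spec {a b : Bool} (h : imp a b = true) (ha : a = true) : b = true := by
  subst ha; exact h

def z (n : ℕ) : Bool := Nat.beq (n % 5) 0

def q0 (a b c d e f s : ℕ) : ℕ := 2 * (a * f) + 2 * (b * e) + 2 * (c * (s + 4 * c)) + d * d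
def q1 (a b d e f s : ℕ) : ℕ := f * s + d * f + a * e + b * s
def q2 (a b d e f s : ℕ) : ℕ := 2 * ((s + d) * e) + 2 * (a * s) + 2 * ((b + f) * (b + f)) + f * f
def q3 (a b d e f s : ℕ) : ℕ :=
  (s + d) * s + a * (2 * (b + f)) + 2 * ((b + f) * (a + e)) + f * e + s * (s + d)
    + e * (2 * (b + f) + f)
def q4 (a b d e f s : ℕ) : ℕ :=
  2 * ((2 * (b + f) + f) * s) + 2 * ((s + d) * (2 * (b + f))) + 2 * ((a + e) * (a + e)) + e * e

def chk : Bool :=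
  all5 fun a => all5 fun b => all5 fun d => all5 fun e => all5 fun f => all5 fun s =>
    imp (z (q1 a b d e f s)) <| imp (z (q2 a b d e f s)) <| imp (z (q3 a b d e f s)) <|
    all5 fun t => imp (z (q4 a b d e f s + 4 * (t * t))) <|
    all5 fun c => imp (z (q0 a b c d e f s)) (Nat.beq (a + b + c + d + e + f + s) 0)

set_option maxRecDepth 100000 in
theorem chk_true : chk = true := by decide +kernel

theorem z_of (n : ℕ) (h : (n : ZMod 5) = 0) : z n = true := by
  have := (ZMod.natCast_eq_zero_iff n 5).1 h
  rw [z, Nat.beq_eq]; omega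

theorem five : (5 : ZMod 5) = 0 := by decide

theorem key (a b c d e f s t : ZMod 5)
    (h0 : 2 * (a * f) + 2 * (b * e) + 2 * (c * (s + 4 * c)) + d * d = 0)
    (h1 : f * s + d * f + a * e + b * s = 0)
    (h2 : 2 * ((s + d) * e) + 2 * (a * s) + 2 * ((b + f) * (b + f)) + f * f = 0)
    (h3 : (s + d) * s + a * (2 * (b + f)) + 2 * ((b + f) * (a + e)) + f * e + s * (s + d)
      + e * (2 * (b + f) + f) = 0)
    (h4 : 2 * ((2 * (b + f) + f) * s) + 2 * ((s + d) * (2 * (b + f))) + 2 * ((a + e) * (a + e))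
      + e * e + 4 * (t * t) = 0) :
    a = 0 ∧ b = 0 ∧ c = 0 ∧ d = 0 ∧ e = 0 ∧ f = 0 ∧ s = 0 := by
  obtain ⟨a, ha, rfl⟩ : ∃ n : ℕ, n < 5 ∧ (n : ZMod 5) = a := ⟨a.val, a.val_lt, by simp⟩
  obtain ⟨b, hb, rfl⟩ : ∃ n : ℕ, n < 5 ∧ (n : ZMod 5) = b := ⟨b.val, b.val_lt, by simp⟩
  obtain ⟨c, hc, rfl⟩ : ∃ n : ℕ, n < 5 ∧ (n : ZMod 5) = c := ⟨c.val, c.val_lt, by simp⟩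
  obtain ⟨d, hd, rfl⟩ : ∃ n : ℕ, n < 5 ∧ (n : ZMod 5) = d := ⟨d.val, d.val_lt, by simp⟩
  obtain ⟨e, he, rfl⟩ : ∃ n : ℕ, n < 5 ∧ (n : ZMod 5) = e := ⟨e.val, e.val_lt, by simp⟩
  obtain ⟨f, hf, rfl⟩ : ∃ n : ℕ, n < 5 ∧ (n : ZMod 5) = f := ⟨f.val, f.val_lt, by simp⟩
  obtain ⟨s, hs, rfl⟩ : ∃ n : ℕ, n < 5 ∧ (n : ZMod 5) = s := ⟨s.val, s.val_lt, by simp⟩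
  obtain ⟨t, ht, rfl⟩ : ∃ n : ℕ, n < 5 ∧ (n : ZMod 5) = t := ⟨t.val, t.val_lt, by simp⟩
  have k1 := all5_spec (all5_spec (all5_spec (all5_spec (all5_spec (all5_spec chk_true
    ha) hb) hd) he) hf) hs
  have k2 := imp_spec k1 (z_of _ (by simp only [q1]; push_cast; exact h1))
  have k3 := imp_spec k2 (z_of _ (by simp only [q2]; push_cast; exact h2))
  have k4 := imp_spec k3 (z_of _ (by simp only [q3]; push_cast; exact h3))
  have k5 := imp_spec (all5_spec k4 ht) (z_of _ (by simp only [q4]; push_cast; exact h4))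
  have k6 := imp_spec (all5_spec k5 hc) (z_of _ (by simp only [q0]; push_cast; exact h0))
  rw [Nat.beq_eq] at k6
  obtain ⟨rfl, rfl, rfl, rfl, rfl, rfl, rfl⟩ :
    a = 0 ∧ b = 0 ∧ c = 0 ∧ d = 0 ∧ e = 0 ∧ f = 0 ∧ s = 0 := by omega
  simp

theorem A5_mul (X : Matrix (Fin 7) (Fin 7) (ZMod 5)) :
    (A5 * X) 0 0 = X 2 0 + X 3 0 + X 4 0 ∧ (A5 * X) 1 0 = X 0 0 ∧
    (A5 * X) 2 0 = X 1 0 + X 6 0 ∧ (A5 * X) 3 0 = X 6 0 ∧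
    (A5 * X) 4 0 = X 1 0 + X 6 0 ∧ (A5 * X) 5 0 = X 2 0 + X 4 0 ∧ (A5 * X) 6 0 = X 5 0 := by
  simp [Matrix.mul_apply, Fin.sum_univ_seven, A5]

theorem J_mul (X : Matrix (Fin 7) (Fin 7) (ZMod 5)) (i j : Fin 7) :
    (Jmat * X) i j = X (Fin.rev i) j := by
  fin_cases i <;> simp [Matrix.mul_apply, Fin.sum_univ_seven, Jmat, Fin.rev]

theorem form (g X : Matrix (Fin 7) (Fin 7) (ZMod 5)) :
    (gᵀ * (Jmat * X)) 0 0 = g 0 0 * X 6 0 + g 1 0 * X 5 0 + g 2 0 * X 4 0 + g 3 0 * X 3 0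
      + g 4 0 * X 2 0 + g 5 0 * X 1 0 + g 6 0 * X 0 0 := by
  rw [Matrix.mul_apply]
  simp [J_mul, Fin.sum_univ_seven, Fin.rev]

theorem JJ : Jmat * Jmat = 1 := by decide +kernel
theorem JA : (Jmat * A5)ᵀ = Jmat * A5 := by decide +kernel
theorem JT : Jmatᵀ = Jmat := by decide +kernel

end S11

open S11

/-- The `p = 5` analogue of Lemma 2.2: for every `g ∈ O₇(𝔽₅)`, the conjugate
`g⁻¹·A₅·g` does not vanish at all positions of `P`. -/
theorem stmt11 (g : Matrix (Fin 7) (Fin 7) (ZMod 5)) (hg : gᵀ * Jmat * g = Jmat) :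
    ∃ p ∈ P, (g⁻¹ * A5 * g) p.1 p.2 ≠ 0 := by
  by_contra hcon
  push Not at hcon
  have hl : (Jmat * gᵀ * Jmat) * g = 1 := by
    rw [Matrix.mul_assoc, Matrix.mul_assoc, ← Matrix.mul_assoc gᵀ, hg, JJ]
  have hinv : g⁻¹ = Jmat * gᵀ * Jmat := Matrix.inv_eq_left_inv hl
  have hr : g * g⁻¹ = 1 := by rw [hinv]; exact mul_eq_one_comm.1 hl
  obtain ⟨B, hB⟩ : ∃ B, B = g⁻¹ * A5 * g := ⟨_, rfl⟩
  rw [← hB] at hcon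
  have hAg : A5 * g = g * B := by
    rw [hB, ← Matrix.mul_assoc, ← Matrix.mul_assoc, hr, Matrix.one_mul]
  have hJB : Jmat * B = gᵀ * (Jmat * A5) * g := by
    rw [hB, hinv]
    simp only [← Matrix.mul_assoc]
    rw [JJ, Matrix.one_mul]
  have hsym : (Jmat * B)ᵀ = Jmat * B := by
    rw [hJB, Matrix.transpose_mul, Matrix.transpose_mul, JA, Matrix.transpose_transpose,
      Matrix.mul_assoc gᵀ]
  have s1 : B 6 5 = B 1 0 := by
    have := congrFun (congrFun hsym 5) 0
    rw [Matrix.transpose_apply, J_mul, J_mul] at this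
    exact this
  have s2 : B 5 3 = B 3 1 := by
    have := congrFun (congrFun hsym 3) 1
    rw [Matrix.transpose_apply, J_mul, J_mul] at this
    exact this
  have z20 : B 2 0 = 0 := hcon (2,0) (by simp [P])
  have z30 : B 3 0 = 0 := hcon (3,0) (by simp [P])
  have z40 : B 4 0 = 0 := hcon (4,0) (by simp [P])
  have z41 : B 4 1 = 0 := hcon (4,1) (by simp [P])
  have z50 : B 5 0 = 0 := hcon (5,0) (by simp [P])
  have z51 : B 5 1 = 0 := hcon (5,1) (by simp [P])
  have z52 : B 5 2 = 0 := hcon (5,2) (by simp [P])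
  have z60 : B 6 0 = 0 := hcon (6,0) (by simp [P])
  have z61 : B 6 1 = 0 := hcon (6,1) (by simp [P])
  have z62 : B 6 2 = 0 := hcon (6,2) (by simp [P])
  have z63 : B 6 3 = 0 := hcon (6,3) (by simp [P])
  have z64 : B 6 4 = 0 := hcon (6,4) (by simp [P])
  have pull : ∀ X, gᵀ * (Jmat * (g * X)) = Jmat * X := fun X => by
    rw [← Matrix.mul_assoc, ← Matrix.mul_assoc, hg]
  have e1 : A5 * (A5 * g) = g * (B * B) := by
    rw [hAg, ← Matrix.mul_assoc, hAg, Matrix.mul_assoc]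
  have e2 : A5 * (A5 * (A5 * g)) = g * (B * (B * B)) := by
    rw [e1, ← Matrix.mul_assoc, hAg, Matrix.mul_assoc]
  have e3 : A5 * (A5 * (A5 * (A5 * g))) = g * (B * (B * (B * B))) := by
    rw [e2, ← Matrix.mul_assoc, hAg, Matrix.mul_assoc]
  have f0 := form g g
  have f1 := form g (A5 * g)
  have f2 := form g (A5 * (A5 * g))
  have f3 := form g (A5 * (A5 * (A5 * g)))
  have f4 := form g (A5 * (A5 * (A5 * (A5 * g))))
  obtain ⟨a0, a1, a2, a3, a4, a5, a6⟩ := A5_mul g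
  obtain ⟨b0, b1, b2, b3, b4, b5, b6⟩ := A5_mul (A5 * g)
  obtain ⟨c0, c1, c2, c3, c4, c5, c6⟩ := A5_mul (A5 * (A5 * g))
  obtain ⟨d0, d1, d2, d3, d4, d5, d6⟩ := A5_mul (A5 * (A5 * (A5 * g)))
  rw [← Matrix.mul_assoc, hg] at f0
  simp only [d0, d1, d2, d3, d4, d5, d6, c0, c1, c2, c3, c4, c5, c6, b0, b1, b2, b3, b4, b5, b6,
    a0, a1, a2, a3, a4, a5, a6] at f1 f2 f3 f4
  rw [hAg, pull, J_mul] at f1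
  rw [e1, pull, J_mul] at f2
  rw [e2, pull, J_mul] at f3
  rw [e3, pull, J_mul] at f4
  have r : Fin.rev (0 : Fin 7) = 6 := rfl
  have J0 : Jmat 0 0 = 0 := by decide
  rw [J0] at f0
  rw [r] at f1 f2 f3 f4
  have m2 : (B * B) 6 0 = 0 := by
    rw [Matrix.mul_apply]
    simp only [Fin.sum_univ_seven, z20, z30, z40, z50, z60, z61]; ring
  have n4 : (B * B) 4 0 = 0 := by
    rw [Matrix.mul_apply]; simp only [Fin.sum_univ_seven, z20, z30, z40, z41, z50, z60]; ring
  have n5 : (B * B) 5 0 = 0 := by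
    rw [Matrix.mul_apply]; simp only [Fin.sum_univ_seven, z20, z30, z40, z50, z51, z60]; ring
  have n3 : (B * B) 3 0 = B 3 1 * B 1 0 := by
    rw [Matrix.mul_apply]; simp only [Fin.sum_univ_seven, z20, z30, z40, z50, z51, z60]; ring
  have m3 : (B * (B * B)) 6 0 = 0 := by
    rw [Matrix.mul_apply]; simp only [Fin.sum_univ_seven, n4, n5, m2, z60, z61, z62, z63]; ring
  have m35 : (B * (B * B)) 5 0 = B 5 3 * (B 3 1 * B 1 0) := by
    rw [Matrix.mul_apply]; simp only [Fin.sum_univ_seven, n3, n4, n5, m2, z50, z51, z52]; ring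
  have m4 : (B * (B * (B * B))) 6 0 = B 6 5 * (B 5 3 * (B 3 1 * B 1 0)) := by
    rw [Matrix.mul_apply]
    simp only [Fin.sum_univ_seven, m3, m35, z60, z61, z62, z63, z64]; ring
  rw [z60] at f1
  rw [m2] at f2
  rw [m3] at f3
  rw [m4, s1, s2] at f4
  have h5 := five
  have K := key (g 0 0) (g 1 0) (g 2 0) (g 3 0) (g 5 0) (g 6 0) (g 2 0 + g 4 0) (B 3 1 * B 1 0)
    (by linear_combination -f0 + 2 * g 2 0 ^ 2 * h5)
    (by linear_combination -3 * f1 + (-1) * (g 6 0 * (g 2 0 + g 4 0) + g 3 0 * g 6 0 + g 0 0 * g 5 0 + g 1 0 * (g 2 0 + g 4 0)) * h5)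
    (by linear_combination -f2)
    (by linear_combination -f3)
    (by linear_combination -f4 + (B 3 1 * B 1 0) ^ 2 * h5)
  obtain ⟨k0, k1, k2, k3, k5, k6, ks⟩ := K
  have k4 : g 4 0 = 0 := by rw [k2, zero_add] at ks; exact ks
  have := congrFun (congrFun hl 0) 0
  rw [Matrix.mul_apply] at this
  simp only [Fin.sum_univ_seven, k0, k1, k2, k3, k4, k5, k6, mul_zero, add_zero,
    Matrix.one_apply_eq] at this
  exact absurd this (by decide)
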